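/- arXiv:1610.04800 — 4 statements merged into one kernel-verified Lean document; each statement's English description precedes it below -/
import Mathlib

section
/- For any topological space X, the following are equivalent: (i) Player II has a winning strategy in the selective separability game G_fin(𝒟_X, 𝒟_X); (ii) X is separable and for every x ∈ X Player II has a winning strategy in the countable dense fan tightness game G_fin(𝒟_X, ℬ_{X,x}); (iii) X has a countable dense subset D such that for every x ∈ D Player II has a winning strategy in G_fin(𝒟_X, ℬ_{X,x}). -/
/-!
A single player can run countably many strategies at once: the `i`-th one is started in round `i`,
so that each round calls on only finitely many of them, and it wins against the tail of the play
from round `i` on, since that tail is itself a legal play. A set is dense as soon as its closure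
contains the points of some dense set `D`; hence, for countable `D`, strategies at the points of `D`
combine into one for `G_fin(𝒟_X, 𝒟_X)`. Conversely, a winning strategy applied to a single dense set
repeated forever produces a countable dense set.
-/

open TopologicalSpace Cardinal

/-- Player II has a winning (perfect-information) strategy in the selection game
`G_fin(𝒜, ℬ)`: during round `n`, Player I plays `A n ∈ 𝒜` and II responds with a
finite subset of `A n` depending on `⟨A 0, …, A n⟩`; II wins iff the union of
its selections lies in `ℬ`. -/
def WinStratFin {X : Type*} (𝒜 ℬ : Set (Set X)) : Prop :=
  ∃ σ : (n : ℕ) → (Fin (n + 1) → Set X) → Set X,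
    (∀ (n : ℕ) (s : Fin (n + 1) → Set X), (∀ i, s i ∈ 𝒜) →
      (σ n s).Finite ∧ σ n s ⊆ s (Fin.last n)) ∧
    ∀ A : ℕ → Set X, (∀ n, A n ∈ 𝒜) →
      (⋃ n : ℕ, σ n (fun i => A i)) ∈ ℬ

/-- Player II has a winning Markov strategy in `G_fin(𝒜, ℬ)`: its finite selection
from `A n` depends only on `A n` and the round number `n`. -/
def WinMarkovFin {X : Type*} (𝒜 ℬ : Set (Set X)) : Prop :=
  ∃ σ : Set X → ℕ → Set X,
    (∀ A ∈ 𝒜, ∀ n : ℕ, (σ A n).Finite ∧ σ A n ⊆ A) ∧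
    ∀ A : ℕ → Set X, (∀ n, A n ∈ 𝒜) → (⋃ n : ℕ, σ (A n) n) ∈ ℬ

/-- Player II has a winning (perfect-information) strategy in the strong selection
game `G_1(𝒜, ℬ)`: during round `n`, Player I plays `A n ∈ 𝒜` and II responds with a
single element of `A n` depending on `⟨A 0, …, A n⟩`; II wins iff the set of
its selections lies in `ℬ`. -/
def WinStratOne {X : Type*} (𝒜 ℬ : Set (Set X)) : Prop :=
  ∃ σ : (n : ℕ) → (Fin (n + 1) → Set X) → X,
    (∀ (n : ℕ) (s : Fin (n + 1) → Set X), (∀ i, s i ∈ 𝒜) →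
      σ n s ∈ s (Fin.last n)) ∧
    ∀ A : ℕ → Set X, (∀ n, A n ∈ 𝒜) →
      {x | ∃ n : ℕ, x = σ n (fun i => A i)} ∈ ℬ

/-- Player II has a winning Markov strategy in `G_1(𝒜, ℬ)`. -/
def WinMarkovOne {X : Type*} (𝒜 ℬ : Set (Set X)) : Prop :=
  ∃ σ : Set X → ℕ → X,
    (∀ A ∈ 𝒜, ∀ n : ℕ, σ A n ∈ A) ∧
    ∀ A : ℕ → Set X, (∀ n, A n ∈ 𝒜) → {x | ∃ n : ℕ, x = σ (A n) n} ∈ ℬ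

/-- `𝒟_X`: the collection of dense subsets of `X`. -/
def denseFamily (X : Type*) [TopologicalSpace X] : Set (Set X) := {D | Dense D}

/-- `ℬ_{X,x}`: the collection of subsets of `X` having `x` in their closure. -/
def blades (X : Type*) [TopologicalSpace X] (x : X) : Set (Set X) :=
  {A | x ∈ closure A}

/-- An ω-cover of `X`: an open cover such that every finite subset of `X` is
contained in some member. -/
def IsOmegaCover {X : Type*} [TopologicalSpace X] (𝒰 : Set (Set X)) : Prop :=
  (∀ U ∈ 𝒰, IsOpen U) ∧ (⋃₀ 𝒰 = Set.univ) ∧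
    ∀ F : Set X, F.Finite → ∃ U ∈ 𝒰, F ⊆ U

/-- `Ω_X`: the collection of ω-covers of `X`. -/
def omegaCovers (X : Type*) [TopologicalSpace X] : Set (Set (Set X)) :=
  {𝒰 | IsOmegaCover 𝒰}

/-- `𝒪_X`: the collection of open covers of `X`. -/
def openCovers (X : Type*) [TopologicalSpace X] : Set (Set (Set X)) :=
  {𝒰 | (∀ U ∈ 𝒰, IsOpen U) ∧ ⋃₀ 𝒰 = Set.univ}

/-- `C_p(X)`: continuous real-valued functions on `X` with the topology of
pointwise convergence (subspace of the product `ℝ^X`). -/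
abbrev Cp (X : Type*) [TopologicalSpace X] : Type _ := {f : X → ℝ // Continuous f}

/-- Countable fan tightness of `Y` at `y`. -/
def CFTat (Y : Type*) [TopologicalSpace Y] (y : Y) : Prop :=
  ∀ A : ℕ → Set Y, (∀ n, y ∈ closure (A n)) →
    ∃ B : ℕ → Set Y, (∀ n, (B n).Finite ∧ B n ⊆ A n) ∧ y ∈ closure (⋃ n, B n)

/-- Countable dense fan tightness of `Y` at `y`. -/
def CDFTat (Y : Type*) [TopologicalSpace Y] (y : Y) : Prop :=
  ∀ A : ℕ → Set Y, (∀ n, Dense (A n)) →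
    ∃ B : ℕ → Set Y, (∀ n, (B n).Finite ∧ B n ⊆ A n) ∧ y ∈ closure (⋃ n, B n)

/-- Selective separability of `X`. -/
def SelSep (X : Type*) [TopologicalSpace X] : Prop :=
  ∀ D : ℕ → Set X, (∀ n, Dense (D n)) →
    ∃ E : ℕ → Set X, (∀ n, (E n).Finite ∧ E n ⊆ D n) ∧ Dense (⋃ n, E n)

/-- The Ω-Menger selection principle `S_fin(Ω_X, Ω_X)`. -/
def OmegaMenger (X : Type*) [TopologicalSpace X] : Prop :=
  ∀ 𝒰 : ℕ → Set (Set X), (∀ n, 𝒰 n ∈ omegaCovers X) →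
    ∃ ℱ : ℕ → Set (Set X), (∀ n, (ℱ n).Finite ∧ ℱ n ⊆ 𝒰 n) ∧
      (⋃ n, ℱ n) ∈ omegaCovers X

/-- The one-point Lindelöfication topology on `Option α`: sets not containing
`none` (the point `∞`) are open, and a set containing `∞` is open iff its
complement is countable. -/
def lindTop (α : Type*) : TopologicalSpace (Option α) where
  IsOpen S := none ∈ S → Sᶜ.Countable
  isOpen_univ := by simp
  isOpen_inter := by
    intro s t hs ht hmem
    rw [Set.compl_inter]
    exact (hs hmem.1).union (ht hmem.2)
  isOpen_sUnion := by
    intro S hS hmem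
    obtain ⟨s, hsS, hns⟩ := hmem
    exact ((hS s hsS hns).mono
      (Set.compl_subset_compl.mpr (Set.subset_sUnion_of_mem hsS)))

/-- A strategy for the second player in a finite selection game on `X`: the answer in round `n`,
given the moves `A 0, …, A n` of the first player. The rules of the game are imposed separately by
`FinStrategy.IsLegal`. -/
abbrev FinStrategy (X : Type*) := (n : ℕ) → (Fin (n + 1) → Set X) → Set X

namespace FinStrategy

variable {X ι : Type*} {𝒜 : Set (Set X)}

/-- A strategy is legal for `𝒜` if it answers moves in `𝒜` by finite subsets of the latest move. -/
def IsLegal (𝒜 : Set (Set X)) (σ : FinStrategy X) : Prop :=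
  ∀ (n : ℕ) (s : Fin (n + 1) → Set X), (∀ i, s i ∈ 𝒜) →
    (σ n s).Finite ∧ σ n s ⊆ s (Fin.last n)

/-- The set of all points selected by `σ` in the play where the first player's moves are `A`. -/
def outcome (σ : FinStrategy X) (A : ℕ → Set X) : Set X :=
  ⋃ n : ℕ, σ n (fun i => A i)

theorem IsLegal.countable_outcome {σ : FinStrategy X} (hσ : σ.IsLegal 𝒜) {A : ℕ → Set X}
    (hA : ∀ n, A n ∈ 𝒜) : (σ.outcome A).Countable :=
  Set.countable_iUnion fun n => (hσ n _ fun i => hA i).1.countable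

/-- The strategy that selects nothing before round `k` and then plays `σ`, ignoring the first `k`
moves. Round `n = k + m` is encoded by a union over `m`, which avoids subtraction in the
length of the sequence of moves. -/
def delay (k : ℕ) (σ : FinStrategy X) : FinStrategy X := fun n s =>
  ⋃ (m : ℕ) (h : k + m = n), σ m fun j => s ⟨k + j, by omega⟩

theorem delay_of_lt {k n : ℕ} (h : n < k) (σ : FinStrategy X) (s : Fin (n + 1) → Set X) :
    delay k σ n s = ∅ := by
  simp only [delay, Set.iUnion_eq_empty]
  omega

theorem delay_add (k m : ℕ) (σ : FinStrategy X) (s : Fin (k + m + 1) → Set X) :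
    delay k σ (k + m) s = σ m fun j => s (Fin.natAdd k j) := by
  ext x
  simp only [delay, Set.mem_iUnion]
  constructor
  · rintro ⟨m', h, hx⟩
    obtain rfl := Nat.add_left_cancel h
    exact hx
  · exact fun hx => ⟨m, rfl, hx⟩

theorem IsLegal.delay {σ : FinStrategy X} (hσ : σ.IsLegal 𝒜) (k : ℕ) :
    (delay k σ).IsLegal 𝒜 := by
  intro n s hs
  rcases lt_or_ge n k with hn | hn
  · simp only [delay_of_lt hn, Set.finite_empty, Set.empty_subset, and_self]
  · obtain ⟨m, rfl⟩ := Nat.exists_eq_add_of_le hn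
    rw [delay_add]
    exact hσ m _ fun j => hs _

theorem outcome_delay (k : ℕ) (σ : FinStrategy X) (A : ℕ → Set X) :
    (delay k σ).outcome A = σ.outcome fun n => A (k + n) := by
  simp only [outcome, delay]
  rw [Set.iUnion_comm]
  simp only [Set.iUnion_iUnion_eq_right]

variable [Encodable ι]

/-- The strategy that plays all the strategies `σ i` simultaneously, starting `σ i` in the round
whose number is the code of `i`. -/
def stagger (σ : ι → FinStrategy X) : FinStrategy X := fun n s =>
  ⋃ i, delay (Encodable.encode i) (σ i) n s

theorem IsLegal.stagger {σ : ι → FinStrategy X} (hσ : ∀ i, (σ i).IsLegal 𝒜) :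
    (stagger σ).IsLegal 𝒜 := by
  intro n s hs
  have legal_delay i := (hσ i).delay (Encodable.encode i) n s hs
  refine ⟨?_, Set.iUnion_subset fun i => (legal_delay i).2⟩
  have finite_started : {i : ι | Encodable.encode i ≤ n}.Finite :=
    (Set.finite_Iic n).preimage Encodable.encode_injective.injOn
  refine Set.Finite.iUnion finite_started (fun i _ => (legal_delay i).1) fun i hi => ?_
  exact delay_of_lt (not_le.mp hi) _ _

theorem outcome_stagger (σ : ι → FinStrategy X) (A : ℕ → Set X) :
    (stagger σ).outcome A = ⋃ i, (σ i).outcome fun n => A (Encodable.encode i + n) := by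
  simp only [← outcome_delay]
  exact Set.iUnion_comm _

end FinStrategy

namespace WinStratFin

variable {X ι : Type*} {𝒜 ℬ ℬ' : Set (Set X)}

theorem iff_exists_isLegal : WinStratFin 𝒜 ℬ ↔
    ∃ σ : FinStrategy X, σ.IsLegal 𝒜 ∧ ∀ A : ℕ → Set X, (∀ n, A n ∈ 𝒜) → σ.outcome A ∈ ℬ :=
  Iff.rfl

theorem mono (h : WinStratFin 𝒜 ℬ) (hℬ : ℬ ⊆ ℬ') : WinStratFin 𝒜 ℬ' :=
  let ⟨σ, legal, wins⟩ := h
  ⟨σ, legal, fun A hA => hℬ (wins A hA)⟩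

theorem exists_countable_mem (h : WinStratFin 𝒜 ℬ) (h𝒜 : 𝒜.Nonempty) :
    ∃ B ∈ ℬ, B.Countable := by
  obtain ⟨σ, legal, wins⟩ := iff_exists_isLegal.1 h
  obtain ⟨A, hA⟩ := h𝒜
  exact ⟨σ.outcome fun _ => A, wins _ fun _ => hA, legal.countable_outcome fun _ => hA⟩

theorem iInter [Countable ι] {ℬ : ι → Set (Set X)} (hℬ : ∀ i, IsUpperSet (ℬ i))
    (h : ∀ i, WinStratFin 𝒜 (ℬ i)) : WinStratFin 𝒜 (⋂ i, ℬ i) := by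
  have := Encodable.ofCountable ι
  choose σ legal wins using fun i => iff_exists_isLegal.1 (h i)
  refine iff_exists_isLegal.2 ⟨FinStrategy.stagger σ, .stagger legal, fun A hA => ?_⟩
  rw [FinStrategy.outcome_stagger, Set.mem_iInter]
  exact fun i => hℬ i (Set.subset_iUnion _ i) (wins i _ fun _ => hA _)

end WinStratFin

section Density

variable {X : Type*} [TopologicalSpace X]

theorem isUpperSet_blades (x : X) : IsUpperSet (blades X x) :=
  fun _ _ hAB hA => closure_mono hAB hA

theorem denseFamily_subset_blades (x : X) : denseFamily X ⊆ blades X x :=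
  fun _ hA => hA x

theorem iInter_blades_subset_denseFamily {D : Set X} (hD : Dense D) :
    ⋂ x : D, blades X x ⊆ denseFamily X := by
  intro A hA
  have subset_closure : D ⊆ closure A := fun x hx => Set.mem_iInter.1 hA ⟨x, hx⟩
  exact dense_closure.1 (hD.mono subset_closure)

theorem WinStratFin.separableSpace (h : WinStratFin (denseFamily X) (denseFamily X)) :
    SeparableSpace X :=
  let ⟨B, dense, countable⟩ := h.exists_countable_mem ⟨Set.univ, dense_univ⟩
  ⟨B, countable, dense⟩

theorem WinStratFin.of_countable_dense {D : Set X} (hc : D.Countable) (hd : Dense D)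
    (h : ∀ x ∈ D, WinStratFin (denseFamily X) (blades X x)) :
    WinStratFin (denseFamily X) (denseFamily X) :=
  have := hc.to_subtype
  (WinStratFin.iInter (fun x : D => isUpperSet_blades x.1) fun x => h x x.2).mono
    (iInter_blades_subset_denseFamily hd)

end Density

/-- TFAE: (i) II wins `G_fin(𝒟_X, 𝒟_X)`; (ii) `X` is separable and
II wins `G_fin(𝒟_X, ℬ_{X,x})` for every `x`; (iii) there is a countable dense
`D` with II winning `G_fin(𝒟_X, ℬ_{X,x})` for every `x ∈ D`. -/
theorem statement1 (X : Type*) [TopologicalSpace X] :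
    List.TFAE [WinStratFin (denseFamily X) (denseFamily X),
      SeparableSpace X ∧ ∀ x : X, WinStratFin (denseFamily X) (blades X x),
      ∃ D : Set X, D.Countable ∧ Dense D ∧
        ∀ x ∈ D, WinStratFin (denseFamily X) (blades X x)] := by
  tfae_have 1 → 2 := fun h =>
    ⟨h.separableSpace, fun x => h.mono (denseFamily_subset_blades x)⟩
  tfae_have 2 → 3 := fun ⟨⟨D, countable, dense⟩, h⟩ => ⟨D, countable, dense, fun x _ => h x⟩
  tfae_have 3 → 1 := fun ⟨_, countable, dense, h⟩ => .of_countable_dense countable dense h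
  tfae_finish
end

section
/- For any completely regular Hausdorff (Tychonoff) topological space X, the following are equivalent: (i) Player II has a winning strategy in the ω-Menger game G_fin(Ω_X, Ω_X); (ii) for every f ∈ C_p(X), Player II has a winning strategy in the countable fan tightness game G_fin(ℬ_{C_p(X),f}, ℬ_{C_p(X),f}); (iii) for every f ∈ C_p(X), Player II has a winning strategy in the countable dense fan tightness game G_fin(𝒟_{C_p(X)}, ℬ_{C_p(X),f}). -/
open TopologicalSpace Cardinal

/-!
A translation between families turns a winning strategy for II in one selection game into a
winning strategy in another, so everything rests on translating between ω-covers of `X` and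
families of functions. From a function `g` one passes to the open set on which `g` is within `ε`
of `f`: this turns an ω-cover strategy into one whose selections approximate `f` on finite sets
up to the fixed error `ε`. Take such a strategy for each error `1 / (k + 1)` and start the `k`-th
one at round `k`: each still sees an entire play, only finitely many are active in any round, and
`f` ends up in the closure of the selections. Conversely, an open set `U` is sent to the functions
that equal `f + 1` off `U`. Complete regularity makes the functions coming from an ω-cover dense,
and a function within distance `1` of `f` on a finite set can only come from a `U` containing that
set.
-/

open Set Filter Topology

section SelectionGames

variable {Y Z : Type*}

theorem WinStratFin.anti_left {𝒜 𝒜' ℬ : Set (Set Y)} (h : WinStratFin 𝒜 ℬ) (h𝒜 : 𝒜' ⊆ 𝒜) :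
    WinStratFin 𝒜' ℬ := by
  obtain ⟨σ, hσ, hwin⟩ := h
  exact ⟨σ, fun n s hs => hσ n s fun i => h𝒜 (hs i), fun A hA => hwin A fun n => h𝒜 (hA n)⟩

theorem exists_finite_subset_image_preimage {R : SetRel Y Z} {C : Set Y} {B : Set Z}
    (hB : B.Finite) (hBC : B ⊆ R.image C) :
    ∃ D : Set Y, D.Finite ∧ D ⊆ C ∧ B ⊆ R.image D ∧ D ⊆ R.preimage B := by
  have := hB.to_subtype
  choose y hyC hyR using hBC
  refine ⟨range fun z : B => y z.2, finite_range _, ?_,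
    fun z hz => ⟨_, mem_range_self (⟨z, hz⟩ : B), hyR hz⟩, ?_⟩
  · rintro _ ⟨z, rfl⟩
    exact hyC z.2
  · rintro _ ⟨z, rfl⟩
    exact ⟨z, z.2, hyR z.2⟩

theorem WinStratFin.of_rel {𝒜 ℬ : Set (Set Z)} {𝒞 𝒟 : Set (Set Y)} (h : WinStratFin 𝒜 ℬ)
    (R : SetRel Y Z) (himage : ∀ C ∈ 𝒞, R.image C ∈ 𝒜)
    (hpull : ∀ B ∈ ℬ, ∀ D, B ⊆ R.image D → D ⊆ R.preimage B → D ∈ 𝒟) :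
    WinStratFin 𝒞 𝒟 := by
  obtain ⟨σ, hσ, hwin⟩ := h
  choose! pull hfin hsub hcover hback using
    fun (C : Set Y) (B : Set Z) (hB : B.Finite ∧ B ⊆ R.image C) =>
      exists_finite_subset_image_preimage hB.1 hB.2
  have hlegal : ∀ n (s : Fin (n + 1) → Set Y), (∀ i, s i ∈ 𝒞) →
      (σ n fun i => R.image (s i)).Finite ∧
        (σ n fun i => R.image (s i)) ⊆ R.image (s (Fin.last n)) :=
    fun n s hs => hσ n _ fun i => himage _ (hs i)
  refine ⟨fun n s => pull (s (Fin.last n)) (σ n fun i => R.image (s i)),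
    fun n s hs => ⟨hfin _ _ (hlegal n s hs), hsub _ _ (hlegal n s hs)⟩, fun C hC => ?_⟩
  have hlegalC (n : ℕ) := hlegal n (fun i => C i) fun i => hC i
  refine hpull _ (hwin (fun n => R.image (C n)) fun n => himage _ (hC n)) _ ?_ ?_
  · rw [SetRel.image_iUnion]
    exact iUnion_mono fun n => hcover _ _ (hlegalC n)
  · rw [SetRel.preimage_iUnion]
    exact iUnion_mono fun n => hback _ _ (hlegalC n)

theorem WinStratFin.iInter_s4 {𝒜 : Set (Set Y)} {ℬ : ℕ → Set (Set Y)}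
    (hℬ : ∀ k, IsUpperSet (ℬ k)) (h : ∀ k, WinStratFin 𝒜 (ℬ k)) :
    WinStratFin 𝒜 (⋂ k, ℬ k) := by
  choose σ hσ hwin using h
  refine ⟨fun n s => ⋃ (p : ℕ × ℕ) (hp : p.1 + p.2 = n),
    σ p.1 p.2 fun i => s ⟨p.1 + i, by omega⟩, fun n s hs => ?_, fun A hA => ?_⟩
  · have hactive : {p : ℕ × ℕ | p.1 + p.2 = n}.Finite :=
      ((finite_Iic n).prod (finite_Iic n)).subset fun p hp =>
        ⟨le_of_add_le_left hp.le, le_of_add_le_right hp.le⟩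
    refine ⟨hactive.biUnion' fun p _ => (hσ _ _ _ fun _ => hs _).1, iUnion₂_subset fun p hp => ?_⟩
    obtain rfl := hp
    exact (hσ _ _ _ fun _ => hs _).2
  · refine mem_iInter.2 fun k => hℬ k ?_ (hwin k (fun m => A (k + m)) fun _ => hA _)
    refine iUnion_subset fun m => subset_iUnion_of_subset (k + m) ?_
    exact subset_iUnion₂_of_subset (k, m) rfl subset_rfl

end SelectionGames

section FunctionSpace

variable {X : Type*} [TopologicalSpace X]

theorem isOmegaCover_iff {𝒰 : Set (Set X)} :
    IsOmegaCover 𝒰 ↔ (∀ U ∈ 𝒰, IsOpen U) ∧ ∀ F : Set X, F.Finite → ∃ U ∈ 𝒰, F ⊆ U := by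
  refine ⟨fun h => ⟨h.1, h.2.2⟩, fun ⟨hopen, hfin⟩ => ⟨hopen, ?_, hfin⟩⟩
  refine sUnion_eq_univ_iff.2 fun x => ?_
  obtain ⟨U, hU, hxU⟩ := hfin {x} (finite_singleton x)
  exact ⟨U, hU, hxU rfl⟩

/-- The set on which `g` is within `ε` of `f`, the open set that `g` contributes to the ω-cover
game. -/
def closeSet (f : Cp X) (ε : ℝ) (g : Cp X) : Set X :=
  {x | dist (g.1 x) (f.1 x) < ε}

theorem isOpen_closeSet (f : Cp X) (ε : ℝ) (g : Cp X) : IsOpen (closeSet f ε g) :=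
  isOpen_lt (g.2.dist f.2) continuous_const

theorem closeSet_mono (f g : Cp X) : Monotone fun ε => closeSet f ε g :=
  fun _ _ hεδ _ hx => lt_of_lt_of_le hx hεδ

theorem Cp.nhds_hasBasis (f : Cp X) :
    (𝓝 f).HasBasis (fun p : Set X × ℝ => p.1.Finite ∧ 0 < p.2)
      fun p => {g | p.1 ⊆ closeSet f p.2 g} := by
  rw [nhds_induced, nhds_pi]
  refine (hasBasis_pi_same_index (fun _ => Metric.nhds_basis_ball) ?_).comap _
  intro F ε hF hε
  have hsmall : ∀ᶠ δ in 𝓝[>] (0 : ℝ), ∀ x ∈ F, δ ∈ Ioc 0 (ε x) :=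
    (eventually_all_finite hF).2 fun x hx => Ioc_mem_nhdsGT (hε x hx)
  obtain ⟨δ, hδε, hδ⟩ := (hsmall.and self_mem_nhdsWithin).exists
  exact ⟨δ, hδ, fun x hx => Metric.ball_subset_ball (hδε x hx).2⟩

/-- The sets of functions that approximate `f` within the fixed error `ε` on every finite set.
Letting `ε` tend to `0` recovers `blades (Cp X) f`. -/
def approxFamily (f : Cp X) (ε : ℝ) : Set (Set (Cp X)) :=
  {A | ∀ F : Set X, F.Finite → ∃ g ∈ A, F ⊆ closeSet f ε g}

theorem isUpperSet_approxFamily (f : Cp X) (ε : ℝ) : IsUpperSet (approxFamily f ε) := by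
  intro A B hAB hA F hF
  obtain ⟨g, hg, hgF⟩ := hA F hF
  exact ⟨g, hAB hg, hgF⟩

theorem approxFamily_mono (f : Cp X) : Monotone (approxFamily f) := by
  intro ε δ hεδ A hA F hF
  obtain ⟨g, hg, hgF⟩ := hA F hF
  exact ⟨g, hg, hgF.trans (closeSet_mono f g hεδ)⟩

theorem mem_blades_iff_forall_mem_approxFamily {f : Cp X} {A : Set (Cp X)} :
    A ∈ blades (Cp X) f ↔ ∀ ε > 0, A ∈ approxFamily f ε :=
  (mem_closure_iff_nhds_basis (Cp.nhds_hasBasis f)).trans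
    ⟨fun h ε hε F hF => h (F, ε) ⟨hF, hε⟩, fun h p hp => h p.2 hp.2 p.1 hp.1⟩

theorem blades_eq_iInter_approxFamily (f : Cp X) :
    blades (Cp X) f = ⋂ k : ℕ, approxFamily f (1 / (k + 1)) := by
  ext A
  rw [mem_blades_iff_forall_mem_approxFamily, mem_iInter]
  refine ⟨fun h k => h _ Nat.one_div_pos_of_nat, fun h ε hε => ?_⟩
  obtain ⟨k, hk⟩ := exists_nat_one_div_lt hε
  exact approxFamily_mono f hk.le (h k)

theorem image_closeSet_mem_omegaCovers_iff {f : Cp X} {ε : ℝ} {A : Set (Cp X)} :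
    closeSet f ε '' A ∈ omegaCovers X ↔ A ∈ approxFamily f ε := by
  refine isOmegaCover_iff.trans ?_
  simp only [forall_mem_image, exists_mem_image, isOpen_closeSet, implies_true, true_and]
  rfl

theorem WinStratFin.approxFamily_of_omegaCovers
    (h : WinStratFin (omegaCovers X) (omegaCovers X)) (f : Cp X) (ε : ℝ) :
    WinStratFin (approxFamily f ε) (approxFamily f ε) := by
  refine h.of_rel (Function.graph (closeSet f ε))
    (fun A hA => image_closeSet_mem_omegaCovers_iff.2 hA) fun 𝒰 h𝒰 A h𝒰A hA𝒰 => ?_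
  have hA : closeSet f ε '' A ⊆ 𝒰 := by
    rintro _ ⟨g, hg, rfl⟩
    obtain ⟨_, hU, rfl⟩ := hA𝒰 hg
    exact hU
  exact image_closeSet_mem_omegaCovers_iff.1 (hA.antisymm h𝒰A ▸ h𝒰)

theorem WinStratFin.blades_of_omegaCovers
    (h : WinStratFin (omegaCovers X) (omegaCovers X)) (f : Cp X) :
    WinStratFin (blades (Cp X) f) (blades (Cp X) f) := by
  rw [blades_eq_iInter_approxFamily]
  exact .iInter (fun _ => isUpperSet_approxFamily f _) fun k =>
    (h.approxFamily_of_omegaCovers f _).anti_left (iInter_subset _ k)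

theorem denseFamily_subset_blades_s4 (Y : Type*) [TopologicalSpace Y] (y : Y) :
    denseFamily Y ⊆ blades Y y :=
  fun _ hD => hD y

theorem exists_continuous_zero_one_of_finite_isClosed [CompletelyRegularSpace X] {F K : Set X}
    (hF : F.Finite) (hK : IsClosed K) (hFK : Disjoint F K) :
    ∃ p : X → unitInterval, Continuous p ∧ EqOn p 0 F ∧ EqOn p 1 K := by
  choose! q hqc hqx hqK using fun x (hx : x ∈ F) =>
    CompletelyRegularSpace.completely_regular x K hK (disjoint_left.1 hFK hx)
  refine ⟨fun y => ∏ x ∈ hF.toFinset, q x y,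
    continuous_finsetProd _ fun x hx => hqc x (hF.mem_toFinset.1 hx),
    fun x hx => ?_, fun y hy => ?_⟩
  · exact Finset.prod_eq_zero (hF.mem_toFinset.2 hx) (hqx x hx)
  · exact Finset.prod_eq_one fun x hx => hqK x (hF.mem_toFinset.1 hx) hy

theorem Cp.exists_eqOn_eqOn [CompletelyRegularSpace X] {F K : Set X}
    (hF : F.Finite) (hK : IsClosed K) (hFK : Disjoint F K) (f g : Cp X) :
    ∃ h : Cp X, EqOn h.1 f.1 F ∧ EqOn h.1 g.1 K := by
  obtain ⟨p, hp, hpF, hpK⟩ := exists_continuous_zero_one_of_finite_isClosed hF hK hFK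
  refine ⟨⟨fun x => AffineMap.lineMap (f.1 x) (g.1 x) (p x : ℝ), ?_⟩, ?_, ?_⟩
  · exact f.2.lineMap g.2 (continuous_subtype_val.comp hp)
  · intro x hx
    simp [hpF hx]
  · intro x hx
    simp [hpK hx]

/-- Relates an open set `U` to the functions that equal `f + 1` off `U`: such a function is within
distance `1` of `f` only at points of `U`. -/
def shiftOffRel (f : Cp X) : SetRel (Set X) (Cp X) :=
  {p | IsOpen p.1 ∧ ∀ x ∉ p.1, p.2.1 x = f.1 x + 1}

theorem closeSet_one_subset_of_mem_shiftOffRel {f g : Cp X} {U : Set X}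
    (h : (U, g) ∈ shiftOffRel f) : closeSet f 1 g ⊆ U := by
  intro x hx
  by_contra hxU
  have hgx : g.1 x = f.1 x + 1 := h.2 x hxU
  simp [closeSet, hgx] at hx

theorem dense_image_shiftOffRel [CompletelyRegularSpace X] (f : Cp X) {𝒰 : Set (Set X)}
    (h𝒰 : 𝒰 ∈ omegaCovers X) : Dense ((shiftOffRel f).image 𝒰) := by
  refine fun g => mem_blades_iff_forall_mem_approxFamily.2 fun ε hε F hF => ?_
  obtain ⟨hopen, hcover⟩ := isOmegaCover_iff.1 h𝒰
  obtain ⟨U, hU, hFU⟩ := hcover F hF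
  obtain ⟨p, hpF, hpU⟩ := Cp.exists_eqOn_eqOn hF (hopen U hU).isClosed_compl
    (disjoint_compl_right_iff_subset.2 hFU) g ⟨fun x => f.1 x + 1, f.2.add continuous_const⟩
  refine ⟨p, ⟨U, hU, hopen U hU, fun x hx => hpU hx⟩, fun x hx => ?_⟩
  simpa [closeSet, hpF hx] using hε

theorem mem_omegaCovers_of_subset_image_shiftOffRel {f : Cp X} {A : Set (Cp X)} {𝒰 : Set (Set X)}
    (hA : A ∈ blades (Cp X) f) (hA𝒰 : A ⊆ (shiftOffRel f).image 𝒰)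
    (h𝒰A : 𝒰 ⊆ (shiftOffRel f).preimage A) : 𝒰 ∈ omegaCovers X := by
  refine isOmegaCover_iff.2 ⟨fun U hU => ?_, fun F hF => ?_⟩
  · obtain ⟨g, -, hUg⟩ := h𝒰A hU
    exact hUg.1
  · obtain ⟨g, hg, hFg⟩ := mem_blades_iff_forall_mem_approxFamily.1 hA 1 one_pos F hF
    obtain ⟨U, hU, hUg⟩ := hA𝒰 hg
    exact ⟨U, hU, hFg.trans (closeSet_one_subset_of_mem_shiftOffRel hUg)⟩

theorem WinStratFin.omegaCovers_of_denseFamily [CompletelyRegularSpace X] {f : Cp X}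
    (h : WinStratFin (denseFamily (Cp X)) (blades (Cp X) f)) :
    WinStratFin (omegaCovers X) (omegaCovers X) :=
  h.of_rel (shiftOffRel f) (fun _ => dense_image_shiftOffRel f)
    fun _ hA _ => mem_omegaCovers_of_subset_image_shiftOffRel hA

end FunctionSpace

theorem statement4_general (X : Type*) [TopologicalSpace X] [CompletelyRegularSpace X] :
    List.TFAE [WinStratFin (omegaCovers X) (omegaCovers X),
      ∀ f : Cp X, WinStratFin (blades (Cp X) f) (blades (Cp X) f),
      ∀ f : Cp X, WinStratFin (denseFamily (Cp X)) (blades (Cp X) f)] := by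
  tfae_have 1 → 2 := WinStratFin.blades_of_omegaCovers
  tfae_have 2 → 3 := fun h f => (h f).anti_left (denseFamily_subset_blades_s4 (Cp X) f)
  tfae_have 3 → 1 := fun h => (h ⟨0, continuous_zero⟩).omegaCovers_of_denseFamily
  tfae_finish

/-- For Tychonoff `X`, TFAE: (i) II wins `G_fin(Ω_X, Ω_X)`;
(ii) II wins the countable fan tightness game at every `f ∈ C_p(X)`;
(iii) II wins the countable dense fan tightness game at every `f ∈ C_p(X)`. -/
theorem statement4 (X : Type*) [TopologicalSpace X] [T35Space X] :
    List.TFAE [WinStratFin (omegaCovers X) (omegaCovers X),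
      ∀ f : Cp X, WinStratFin (blades (Cp X) f) (blades (Cp X) f),
      ∀ f : Cp X, WinStratFin (denseFamily (Cp X)) (blades (Cp X) f)] :=
  statement4_general X
end

section
/- The one-point Lindelöfication L(ω₁) of the discrete space of size ℵ₁ is not σ-compact, and Player II does not have a winning Markov strategy in the ω-Menger game G_fin(Ω_{L(ω₁)}, Ω_{L(ω₁)}). -/
open TopologicalSpace Cardinal

/-!
A winning Markov strategy for II makes the space a countable union of relatively compact subsets: a
point that II could miss in every round, each time against a suitable cover, would be missed when I
plays exactly those covers. A σ-compact space is such a union as well. In a space where all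
countable subsets are closed, relatively compact subsets are finite, so such a space is countable.
-/

section

variable {X : Type*}

theorem WinMarkovFin.mono_right {𝒜 ℬ 𝒞 : Set (Set X)} (hℬ𝒞 : ℬ ⊆ 𝒞)
    (h : WinMarkovFin 𝒜 ℬ) : WinMarkovFin 𝒜 𝒞 :=
  let ⟨σ, hσ, hwin⟩ := h
  ⟨σ, hσ, fun A hA ↦ hℬ𝒞 (hwin A hA)⟩

/-- The unions of finite subfamilies of `𝒰`; they turn an open cover into an ω-cover. -/
def finiteUnions (𝒰 : Set (Set X)) : Set (Set X) :=
  Set.sUnion '' {𝒯 | 𝒯 ⊆ 𝒰 ∧ 𝒯.Finite}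

theorem exists_mem_finiteUnions_superset {𝒰 : Set (Set X)} {F : Set X}
    (hF : F.Finite) (hF𝒰 : F ⊆ ⋃₀ 𝒰) : ∃ V ∈ finiteUnions 𝒰, F ⊆ V := by
  have exists_mem : ∀ x ∈ F, ∃ U ∈ 𝒰, x ∈ U := fun x hx ↦ hF𝒰 hx
  choose! U hU𝒰 hxU using exists_mem
  exact ⟨_, ⟨U '' F, ⟨Set.image_subset_iff.2 hU𝒰, hF.image U⟩, rfl⟩,
    fun x hx ↦ ⟨U x, Set.mem_image_of_mem U hx, hxU x hx⟩⟩

theorem sUnion_mem_finiteUnions {𝒰 𝒱 : Set (Set X)} (h𝒱 : 𝒱 ⊆ finiteUnions 𝒰)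
    (hfin : 𝒱.Finite) : ⋃₀ 𝒱 ∈ finiteUnions 𝒰 := by
  obtain ⟨𝔗, h𝔗, h𝔗fin, rfl⟩ :=
    Set.exists_subset_image_finite_and.1 ⟨𝒱, h𝒱, hfin, rfl⟩
  refine ⟨⋃₀ 𝔗, ⟨Set.sUnion_subset fun 𝒯 h𝒯 ↦ (h𝔗 h𝒯).1,
    h𝔗fin.sUnion fun 𝒯 h𝒯 ↦ (h𝔗 h𝒯).2⟩, ?_⟩
  rw [Set.sUnion_image]
  exact sSup_sUnion 𝔗

variable [TopologicalSpace X]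

theorem omegaCovers_subset_openCovers : omegaCovers X ⊆ openCovers X :=
  fun _ h𝒰 ↦ ⟨h𝒰.1, h𝒰.2.1⟩

theorem finiteUnions_mem_omegaCovers {𝒰 : Set (Set X)} (h𝒰 : 𝒰 ∈ openCovers X) :
    finiteUnions 𝒰 ∈ omegaCovers X := by
  have exists_superset (F : Set X) (hF : F.Finite) : ∃ V ∈ finiteUnions 𝒰, F ⊆ V :=
    exists_mem_finiteUnions_superset hF (h𝒰.2 ▸ Set.subset_univ F)
  refine ⟨?_, Set.eq_univ_of_forall fun x ↦ ?_, exists_superset⟩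
  · rintro _ ⟨𝒯, ⟨h𝒯, -⟩, rfl⟩
    exact isOpen_sUnion fun U hU ↦ h𝒰.1 U (h𝒯 hU)
  · obtain ⟨V, hV, hxV⟩ := exists_superset {x} (Set.finite_singleton x)
    exact ⟨V, hV, hxV rfl⟩

/-- A subset is relatively compact in `X` if every open cover of the whole space `X` has a finite
subfamily covering the subset; in a regular space this means that its closure is compact. -/
def IsRelativelyCompact (K : Set X) : Prop :=
  ∀ 𝒰 ∈ openCovers X, ∃ 𝒯 ⊆ 𝒰, 𝒯.Finite ∧ K ⊆ ⋃₀ 𝒯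

theorem isRelativelyCompact_of_isCompact {K : Set X} (hK : IsCompact K) :
    IsRelativelyCompact K := by
  rintro 𝒰 ⟨hopen, hcover⟩
  obtain ⟨𝒯, h𝒯, hfin, hK𝒯⟩ := hK.elim_finite_subcover_image (b := 𝒰) (c := id) hopen
    (Set.sUnion_eq_biUnion (s := 𝒰) ▸ hcover ▸ Set.subset_univ K)
  exact ⟨𝒯, h𝒯, hfin, Set.sUnion_eq_biUnion (s := 𝒯) ▸ hK𝒯⟩

theorem isRelativelyCompact_of_forall_omegaCovers {K : Set X}
    (hK : ∀ 𝒰 ∈ omegaCovers X, ∃ 𝒱 ⊆ 𝒰, 𝒱.Finite ∧ K ⊆ ⋃₀ 𝒱) : IsRelativelyCompact K := by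
  intro 𝒰 h𝒰
  obtain ⟨𝒱, h𝒱, hfin, hK𝒱⟩ := hK _ (finiteUnions_mem_omegaCovers h𝒰)
  obtain ⟨𝒯, ⟨h𝒯, h𝒯fin⟩, h𝒯𝒱⟩ := sUnion_mem_finiteUnions h𝒱 hfin
  exact ⟨𝒯, h𝒯, h𝒯fin, hK𝒱.trans h𝒯𝒱.ge⟩

/-- If `K` contains an infinite countable set `C`, the open cover by the sets `(C \ {x})ᶜ`, each of
which meets `C` in at most one point, has no finite subfamily covering `K`. -/
theorem IsRelativelyCompact.finite (hclosed : ∀ C : Set X, C.Countable → IsClosed C)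
    {K : Set X} (hK : IsRelativelyCompact K) : K.Finite := by
  by_contra hinf
  obtain ⟨C, hCK, hC, hCinf⟩ := Set.Infinite.exists_subset_countable_infinite hinf
  let U (x : X) : Set X := (C \ {x})ᶜ
  have hU : Set.range U ∈ openCovers X := by
    refine ⟨?_, Set.eq_univ_of_forall fun x ↦ ⟨U x, ⟨x, rfl⟩, fun hx ↦ hx.2 rfl⟩⟩
    rintro _ ⟨x, rfl⟩
    exact (hclosed _ (hC.mono Set.sdiff_subset)).isOpen_compl
  obtain ⟨𝒯, h𝒯, h𝒯fin, hK𝒯⟩ := hK _ hU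
  have finite_inter : ∀ T ∈ 𝒯, (T ∩ C).Finite := by
    intro T hT
    obtain ⟨x, rfl⟩ := h𝒯 hT
    exact (Set.finite_singleton x).subset fun y hy ↦ by_contra fun hyx ↦ hy.1 ⟨hy.2, hyx⟩
  refine hCinf ((h𝒯fin.biUnion finite_inter).subset fun x hx ↦ ?_)
  obtain ⟨T, hT, hxT⟩ := hK𝒯 (hCK hx)
  exact Set.mem_biUnion hT ⟨hxT, hx⟩

/-- A space is σ-relatively-compact if it is the union of countably many relatively compact
subsets. -/
def IsSigmaRelativelyCompact (X : Type*) [TopologicalSpace X] : Prop :=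
  ∃ K : ℕ → Set X, (∀ n, IsRelativelyCompact (K n)) ∧ ⋃ n, K n = Set.univ

theorem isSigmaRelativelyCompact_of_sigmaCompactSpace [SigmaCompactSpace X] :
    IsSigmaRelativelyCompact X :=
  ⟨compactCovering X, fun n ↦ isRelativelyCompact_of_isCompact (isCompact_compactCovering X n),
    iUnion_compactCovering X⟩

theorem isSigmaRelativelyCompact_of_winMarkovFin
    (h : WinMarkovFin (omegaCovers X) (openCovers X)) : IsSigmaRelativelyCompact X := by
  obtain ⟨σ, hσ, hwin⟩ := h
  refine ⟨fun n ↦ {x | ∀ 𝒰 ∈ omegaCovers X, x ∈ ⋃₀ σ 𝒰 n}, fun n ↦ ?_,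
    Set.eq_univ_of_forall fun x ↦ ?_⟩
  · refine isRelativelyCompact_of_forall_omegaCovers fun 𝒰 h𝒰 ↦ ?_
    exact ⟨σ 𝒰 n, (hσ 𝒰 h𝒰 n).2, (hσ 𝒰 h𝒰 n).1, fun x hx ↦ hx 𝒰 h𝒰⟩
  · by_contra hx
    simp only [Set.mem_iUnion, Set.mem_ofPred_eq, not_exists, not_forall] at hx
    choose 𝒰 h𝒰 hescape using hx
    obtain ⟨U, hU, hxU⟩ : x ∈ ⋃₀ ⋃ n, σ (𝒰 n) n := (hwin 𝒰 h𝒰).2 ▸ Set.mem_univ x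
    obtain ⟨n, hUn⟩ := Set.mem_iUnion.1 hU
    exact hescape n ⟨U, hUn, hxU⟩

theorem IsSigmaRelativelyCompact.countable (hclosed : ∀ C : Set X, C.Countable → IsClosed C)
    (hX : IsSigmaRelativelyCompact X) : Countable X := by
  obtain ⟨K, hK, hcover⟩ := hX
  rw [← Set.countable_univ_iff, ← hcover]
  exact Set.countable_iUnion fun n ↦ ((hK n).finite hclosed).countable

theorem statement9_general [Uncountable X] (hclosed : ∀ C : Set X, C.Countable → IsClosed C) :
    ¬ SigmaCompactSpace X ∧ ¬ WinMarkovFin (omegaCovers X) (openCovers X) := by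
  have hX : ¬ IsSigmaRelativelyCompact X := fun h ↦ not_countable (h.countable hclosed)
  exact ⟨fun _ ↦ hX isSigmaRelativelyCompact_of_sigmaCompactSpace,
    fun h ↦ hX (isSigmaRelativelyCompact_of_winMarkovFin h)⟩

end

theorem isClosed_lindTop_of_countable {α : Type*} {C : Set (Option α)} (hC : C.Countable) :
    @IsClosed _ (lindTop α) C :=
  @IsClosed.mk _ (lindTop α) C fun _ ↦ (compl_compl C).symm ▸ hC

theorem uncountable_option_of_mk_eq_aleph_one {α : Type*} (hα : #α = aleph 1) :
    Uncountable (Option α) :=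
  have : Uncountable α := aleph0_lt_mk_iff.1 (hα ▸ aleph0_lt_aleph_one)
  (Option.some_injective α).uncountable

/-- the one-point Lindelöfication of the discrete space of size
`ℵ₁` is not σ-compact, and II has no winning Markov strategy in its ω-Menger
game. -/
theorem statement9 {α : Type*} (hα : #α = aleph 1) :
    ¬ @SigmaCompactSpace (Option α) (lindTop α) ∧
    ¬ WinMarkovFin (@omegaCovers (Option α) (lindTop α))
        (@omegaCovers (Option α) (lindTop α)) := by
  let _ := lindTop α
  have := uncountable_option_of_mk_eq_aleph_one hα
  exact (statement9_general fun _ ↦ isClosed_lindTop_of_countable).imp_right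
    (mt (.mono_right omegaCovers_subset_openCovers))
end

section
/- Player II has a winning strategy in the strong ω-Menger (ω-Rothberger) game G_1(Ω_{L(ω₁)}, Ω_{L(ω₁)}) on the one-point Lindelöfication L(ω₁) of the discrete space of size ℵ₁, where Player II selects a single open set from each ω-cover played by Player I and wins iff the collection of selected sets is an ω-cover. -/
open TopologicalSpace Cardinal

/-!
Let `p` be a point all of whose neighbourhoods have countable complement, such as `∞ ∈ L(ω₁)`.
Player II plays sets `U n ∋ p`, so each `(U n)ᶜ` is countable, say listed as `e n 0, e n 1, …`.
In round `n` there are only finitely many `e k j` with `k, j < n`, so II can also demand that `U n`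
contain all of them. A point missing from some `U k` is thus caught from some round on, so every
point, and hence every finite set, lies in all but finitely many `U n`.
-/

section

open Filter Set Topology

/-- The strategy for II in `G_1` that reconstructs II's own earlier moves from the moves of I and
answers the current move of I by applying `r` to both; `r` is not given the earlier moves of I. -/
def responseStrategy {X : Type*} (r : (n : ℕ) → (Fin n → X) → Set X → X) (n : ℕ)
    (s : Fin (n + 1) → Set X) : X :=
  r n (fun i => responseStrategy r i fun j => s (j.castLE (by omega))) (s (Fin.last n))
termination_by n
decreasing_by exact i.isLt

theorem winStratOne_of_forall_exists_mem {X : Type*} [Nonempty X] {𝒜 ℬ : Set (Set X)}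
    (R : (n : ℕ) → (Fin n → X) → X → Prop)
    (exists_response : ∀ n (t : Fin n → X), ∀ A ∈ 𝒜, ∃ x ∈ A, R n t x)
    (range_mem : ∀ (A : ℕ → Set X) (x : ℕ → X), (∀ n, A n ∈ 𝒜) → (∀ n, x n ∈ A n) →
      (∀ n, R n (fun i => x i) (x n)) → range x ∈ ℬ) :
    WinStratOne 𝒜 ℬ := by
  choose! r r_mem r_rel using exists_response
  refine ⟨responseStrategy r, fun n s hs => ?_, fun A hA => ?_⟩
  · rw [responseStrategy]
    exact r_mem n _ _ (hs _)
  · have play_eq (n : ℕ) : responseStrategy r n (fun i => A i) =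
        r n (fun i => responseStrategy r i fun j => A j) (A n) := by
      rw [responseStrategy]
      simp only [Fin.val_castLE, Fin.val_last]
    have range_play_mem : range (fun n => responseStrategy r n fun i => A i) ∈ ℬ := by
      refine range_mem A _ hA (fun n => ?_) fun n => ?_
      · rw [play_eq]
        exact r_mem n _ _ (hA n)
      · rw [play_eq n]
        exact r_rel n _ _ (hA n)
    simpa only [range, eq_comm] using range_play_mem

theorem eventually_mem_of_compl_subset_range {X : Type*} {U : ℕ → Set X} {e : ℕ → ℕ → X}
    (compl_subset : ∀ k, (U k)ᶜ ⊆ range (e k)) (mem : ∀ n, ∀ k < n, ∀ j < n, e k j ∈ U n) (x : X) :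
    ∀ᶠ n in atTop, x ∈ U n := by
  by_cases hx : ∀ n, x ∈ U n
  · exact Eventually.of_forall hx
  · obtain ⟨k, hk⟩ := not_forall.mp hx
    obtain ⟨j, rfl⟩ := compl_subset k hk
    filter_upwards [eventually_gt_atTop k, eventually_gt_atTop j] with n hkn hjn
    exact mem n k hkn j hjn

theorem isOmegaCover_range_of_eventually_mem {X ι : Type*} [TopologicalSpace X] {U : ι → Set X}
    {l : Filter ι} [l.NeBot] (hU : ∀ i, IsOpen (U i)) (mem : ∀ x, ∀ᶠ i in l, x ∈ U i) :
    IsOmegaCover (range U) := by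
  refine ⟨forall_mem_range.mpr hU, ?_, fun F hF => ?_⟩
  · exact sUnion_range U ▸ iUnion_eq_univ_iff.mpr fun x => (mem x).exists
  · exact exists_range_iff.mpr ((eventually_all_finite hF).mpr fun x _ => mem x).exists

theorem statement10_general {X : Type*} [TopologicalSpace X] {p : X} (hp : cocountable ≤ 𝓝 p) :
    WinStratOne (omegaCovers X) (omegaCovers X) := by
  have : Nonempty X := ⟨p⟩
  choose! e compl_subset using fun V : Set X => (countable_iff_exists_subset_range (s := Vᶜ)).mp
  refine winStratOne_of_forall_exists_mem
    (fun n t V => p ∈ V ∧ ∀ i, ∀ j < n, e (t i) j ∈ V) (fun n t 𝒰 h𝒰 => ?_)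
    fun 𝒰 U h𝒰 hU hR => ?_
  · have finite_history : (⋃ i, e (t i) '' Iio n).Finite :=
      finite_iUnion fun i => (finite_Iio n).image (e (t i))
    obtain ⟨V, hV, hsub⟩ := h𝒰.2.2 _ (finite_history.insert p)
    refine ⟨V, hV, hsub (mem_insert _ _), fun i j hj => hsub (mem_insert_of_mem p ?_)⟩
    exact mem_iUnion_of_mem i (mem_image_of_mem _ hj)
  · have isOpen_play (n : ℕ) : IsOpen (U n) := (h𝒰 n).1 _ (hU n)
    have countable_compl (n : ℕ) : (U n)ᶜ.Countable :=
      mem_cocountable.mp (hp ((isOpen_play n).mem_nhds (hR n).1))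
    refine isOmegaCover_range_of_eventually_mem isOpen_play
      (eventually_mem_of_compl_subset_range (fun k => compl_subset _ (countable_compl k)) ?_)
    exact fun n k hk => (hR n).2 ⟨k, hk⟩

theorem cocountable_le_nhds_lindTop_none (α : Type*) :
    cocountable ≤ @nhds (Option α) (lindTop α) none := by
  let := lindTop α
  intro S hS
  obtain ⟨U, hUS, hU, hmem⟩ := mem_nhds_iff.mp hS
  exact mem_of_superset (mem_cocountable.mpr (hU hmem)) hUS

end

/-- II has a winning strategy in the ω-Rothberger game
`G_1(Ω, Ω)` on the one-point Lindelöfication of the discrete space of size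
`ℵ₁`. -/
theorem statement10 {α : Type*} (hα : #α = aleph 1) :
    WinStratOne (@omegaCovers (Option α) (lindTop α))
      (@omegaCovers (Option α) (lindTop α)) := by
  let := lindTop α
  exact statement10_general (cocountable_le_nhds_lindTop_none α)
end
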